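/- Let 1 ≤ p < ∞ and let φ be an analytic self-map of the unit disk D with ‖φ‖_∞ = 1. Then, for the composition operator C_φ on the Hardy space H^p, one has lim_{n→∞} [a_n(C_φ)]^{1/n} = 1. -/

import Mathlib

/-!
If `‖φ‖_∞ = 1` then `φ` maps some segment `[0, z₁]` onto a curve reaching arbitrarily close to the
unit circle, so `‖φ‖` takes on that segment every value of a radial interval of large hyperbolic
length `L`. Choose points `w i` (`i < n`) on the segment such that the moduli of `φ (w i)` are
equidistributed in the hyperbolic metric. The pseudo-hyperbolic distance decreases under `z ↦ ‖z‖`,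
and `-log tanh x = O(1 / √x)`, so that the products over `i ≠ j` of the pseudo-hyperbolic distances
between `φ (w i)` and `φ (w j)` are all at least `exp (-O(n / √L))`
(`exp_neg_le_prod_blaschkeFactor`).

Normalized Blaschke products then give functions `F j` with `F j (φ (w i)) = δ_ij` and
`‖F j‖_∞ ≤ exp (O(n / √L))`. If `rank R < n`, some nonzero combination `f` of the `F j` is killed
by `R`; evaluating `C_φ f = (C_φ - R) f` at the `w i`, where point evaluations are bounded
uniformly in `n` (`norm_apply_le_of_hpNorm_le_one`), bounds `‖C_φ - R‖` from below by
`exp (-O(n / √L)) / (C n)` (`le_approxNumber`). Letting `L → ∞` gives the lower bound; the upper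
bound is `a_n(C_φ) ≤ ‖C_φ‖`.
-/

open MeasureTheory Set Filter
open scoped ENNReal NNReal

noncomputable section

/-- The open unit disk in the complex plane. -/
def unitDisk : Set ℂ := {z : ℂ | ‖z‖ < 1}

/-- The Green function of the unit disk, `g(z,w) = log |(1 - w̄ z)/(z - w)|`,
with value `⊤` on the diagonal. -/
def greenFnE (z w : ℂ) : ℝ≥0∞ :=
  if z = w then ⊤ else ENNReal.ofReal (Real.log ‖(1 - (starRingEnd ℂ) w * z) / (z - w)‖)

/-- The Green energy `I(μ) = ∬ g(z,w) dμ(z) dμ(w)` of a measure. -/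
def greenEnergy (μ : Measure ℂ) : ℝ≥0∞ := ∫⁻ z, ∫⁻ w, greenFnE z w ∂μ ∂μ

/-- `greenV E = V(E)`: the infimum of energies of probability measures supported by a
compact subset of `E`. -/
def greenV (E : Set ℂ) : ℝ≥0∞ :=
  ⨅ (μ : Measure ℂ) (_ : IsProbabilityMeasure μ)
    (_ : ∃ K : Set ℂ, K ⊆ E ∧ IsCompact K ∧ μ Kᶜ = 0), greenEnergy μ

/-- The Green capacity `capa(E) = 1/V(E)` of `E` in the unit disk. -/
def greenCapa (E : Set ℂ) : ℝ≥0∞ := (greenV E)⁻¹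

/-- `e^{-1/capa(E)} = e^{-V(E)}`, with the value `0` when `V(E) = ∞` (i.e. `capa(E) = 0`). -/
def expNegV (E : Set ℂ) : ℝ :=
  if greenV E = ⊤ then 0 else Real.exp (-(greenV E).toReal)

/-- The pseudo-hyperbolic distance on the unit disk. -/
def pseudoDist (z w : ℂ) : ℝ := ‖(z - w) / (1 - (starRingEnd ℂ) z * w)‖

/-- The pseudo-hyperbolic diameter of a set. -/
def pseudoDiam (E : Set ℂ) : ℝ :=
  sSup {d : ℝ | ∃ z ∈ E, ∃ w ∈ E, d = pseudoDist z w}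

/-- The `n`-th approximation number `a_n(T) = inf {‖T - R‖ : rank R < n}`. -/
def approxNumber {E F : Type*} [NormedAddCommGroup E] [NormedAddCommGroup F]
    [NormedSpace ℂ E] [NormedSpace ℂ F] (T : E →L[ℂ] F) (n : ℕ) : ℝ :=
  sInf {c : ℝ | ∃ R : E →L[ℂ] F,
    Module.rank ℂ (LinearMap.range (R : E →ₗ[ℂ] F)) < (n : Cardinal) ∧ c = ‖T - R‖}

/-- The squared norm `‖f‖² = |f(0)|² + ∫_D |f'|² ω dA` (normalized area measure) of the
weighted analytic Hilbert space `H_ω`. -/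
def hwNormSq (ω : ℝ → ℝ) (f : ℂ → ℂ) : ℝ :=
  ‖f 0‖ ^ 2 + (∫ z in unitDisk, ‖deriv f z‖ ^ 2 * ω ‖z‖) / Real.pi

/-- Membership in the weighted analytic Hilbert space `H_ω`. -/
def memHw (ω : ℝ → ℝ) (f : ℂ → ℂ) : Prop :=
  DifferentiableOn ℂ f unitDisk ∧
    IntegrableOn (fun z => ‖deriv f z‖ ^ 2 * ω ‖z‖) unitDisk

/-- The coefficient weights `w_0 = 1`, `w_n = 2 n² ∫_0^1 r^{2n-1} ω(r) dr`. -/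
def wcoef (ω : ℝ → ℝ) (n : ℕ) : ℝ :=
  if n = 0 then 1 else 2 * (n : ℝ) ^ 2 * ∫ r in (0:ℝ)..1, r ^ (2 * n - 1) * ω r

/-- Taylor coefficient of `f` at `0`. -/
def taylorCoeff (f : ℂ → ℂ) (n : ℕ) : ℂ := iteratedDeriv n f 0 / (n.factorial : ℂ)

/-- `(1/2π) ∫_0^{2π} |f(r e^{it})|^p dt`. -/
def hpMean (p : ℝ) (f : ℂ → ℂ) (r : ℝ) : ℝ :=
  (1 / (2 * Real.pi)) *
    ∫ t in (0:ℝ)..(2 * Real.pi), ‖f ((r : ℂ) * Complex.exp ((t : ℂ) * Complex.I))‖ ^ p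

/-- The `H^p` norm. -/
def hpNorm (p : ℝ) (f : ℂ → ℂ) : ℝ :=
  sSup {m : ℝ | ∃ r ∈ Set.Ioo (0:ℝ) 1, m = hpMean p f r ^ (1 / p)}

/-- Membership in the Hardy space `H^p`. -/
def memHp (p : ℝ) (f : ℂ → ℂ) : Prop :=
  DifferentiableOn ℂ f unitDisk ∧
    BddAbove {m : ℝ | ∃ r ∈ Set.Ioo (0:ℝ) 1, m = hpMean p f r ^ (1 / p)}

/-- The squared `H²` norm `‖f‖² = Σ |b_n|²` in terms of Taylor coefficients. -/
def h2NormSq (f : ℂ → ℂ) : ℝ := ∑' n : ℕ, ‖taylorCoeff f n‖ ^ 2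

/-- Membership in the Hardy space `H²`. -/
def memH2 (f : ℂ → ℂ) : Prop :=
  DifferentiableOn ℂ f unitDisk ∧ Summable (fun n : ℕ => ‖taylorCoeff f n‖ ^ 2)

/-- The `n`-th Kolmogorov number. -/
def kolmogorovNumber {E F : Type*} [NormedAddCommGroup E] [NormedAddCommGroup F]
    [NormedSpace ℂ E] [NormedSpace ℂ F] (T : E →L[ℂ] F) (n : ℕ) : ℝ :=
  ⨅ (S : Submodule ℂ F) (_ : Module.rank ℂ S < (n : Cardinal)),
    ⨆ x : {x : E // ‖x‖ ≤ 1}, Metric.infDist (T (x : E)) (S : Set F)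

/-- The `n`-th Gelfand number: infimum of norms of restrictions of `T` to closed
subspaces of codimension `< n`. -/
def gelfandNumber {X : Type*} [NormedAddCommGroup X] [NormedSpace ℂ X]
    (T : X →L[ℂ] X) (n : ℕ) : ℝ :=
  ⨅ (F : Submodule ℂ X) (_ : IsClosed (F : Set X))
    (_ : Module.rank ℂ (X ⧸ F) < (n : Cardinal)),
    ⨆ x : {x : X // x ∈ F ∧ ‖x‖ ≤ 1}, ‖T (x : X)‖

/-- `ε_n(T) = inf_{dim E < n} sup_{x ∈ B_X} dist (T x, T(E))`. -/
def epsApprox {X : Type*} [NormedAddCommGroup X] [NormedSpace ℂ X]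
    (T : X →L[ℂ] X) (n : ℕ) : ℝ :=
  ⨅ (E : Submodule ℂ X) (_ : Module.rank ℂ E < (n : Cardinal)),
    ⨆ x : {x : X // ‖x‖ ≤ 1}, Metric.infDist (T (x : X)) (T '' (E : Set X))

/-! ### Blaschke factors and the pseudo-hyperbolic distance -/

lemma one_sub_conj_mul_ne_zero {a z : ℂ} (ha : ‖a‖ < 1) (hz : ‖z‖ < 1) :
    1 - (starRingEnd ℂ) a * z ≠ 0 := by
  intro h
  have h1 : (starRingEnd ℂ) a * z = 1 := (sub_eq_zero.mp h).symm
  have h2 : ‖a‖ * ‖z‖ = 1 := by simpa using congrArg norm h1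
  nlinarith [norm_nonneg a, norm_nonneg z]

lemma normSq_one_sub_conj_mul (a z : ℂ) :
    ‖1 - (starRingEnd ℂ) a * z‖ ^ 2 = ‖z - a‖ ^ 2 + (1 - ‖a‖ ^ 2) * (1 - ‖z‖ ^ 2) := by
  simp only [Complex.sq_norm, Complex.normSq_apply]
  simp
  ring

/-- The Blaschke factor `(z - a) / (1 - conj a * z)` vanishing at `a`. -/
def blaschkeFactor (a z : ℂ) : ℂ := (z - a) / (1 - (starRingEnd ℂ) a * z)

lemma norm_blaschkeFactor_le_one {a z : ℂ} (ha : ‖a‖ < 1) (hz : ‖z‖ < 1) :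
    ‖blaschkeFactor a z‖ ≤ 1 := by
  unfold blaschkeFactor
  rw [norm_div]
  apply div_le_one_of_le₀ _ (norm_nonneg _)
  apply le_of_sq_le_sq _ (norm_nonneg _)
  rw [normSq_one_sub_conj_mul]
  have h1 : 0 ≤ 1 - ‖a‖ ^ 2 := by nlinarith [norm_nonneg a]
  have h2 : 0 ≤ 1 - ‖z‖ ^ 2 := by nlinarith [norm_nonneg z]
  nlinarith [mul_nonneg h1 h2]

lemma blaschkeFactor_self (a : ℂ) : blaschkeFactor a a = 0 := by
  simp [blaschkeFactor]

lemma differentiableOn_blaschkeFactor {a : ℂ} (ha : ‖a‖ < 1) :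
    DifferentiableOn ℂ (blaschkeFactor a) unitDisk := by
  unfold blaschkeFactor
  apply DifferentiableOn.div (by fun_prop) (by fun_prop)
  intro z hz
  exact one_sub_conj_mul_ne_zero ha (show ‖z‖ < 1 from hz)

/-- The pseudo-hyperbolic distance decreases under the radial projection `z ↦ ‖z‖`. -/
lemma abs_norm_sub_div_le_norm_blaschkeFactor {a z : ℂ} (ha : ‖a‖ < 1) (hz : ‖z‖ < 1) :
    |‖z‖ - ‖a‖| / (1 - ‖a‖ * ‖z‖) ≤ ‖blaschkeFactor a z‖ := by
  have h0 : 0 < 1 - ‖a‖ * ‖z‖ := by nlinarith [norm_nonneg a, norm_nonneg z]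
  have h3 : 0 < ‖1 - (starRingEnd ℂ) a * z‖ := norm_pos_iff.mpr (one_sub_conj_mul_ne_zero ha hz)
  unfold blaschkeFactor
  rw [norm_div, div_le_div_iff₀ h0 h3]
  apply le_of_sq_le_sq _ (by positivity)
  rw [mul_pow, mul_pow, normSq_one_sub_conj_mul, sq_abs]
  have h1 : 0 ≤ 1 - ‖a‖ ^ 2 := by nlinarith [norm_nonneg a]
  have h2 : 0 ≤ 1 - ‖z‖ ^ 2 := by nlinarith [norm_nonneg z]
  have h4 : (‖z‖ - ‖a‖) ^ 2 ≤ ‖z - a‖ ^ 2 := by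
    rw [← sq_abs]
    exact pow_le_pow_left₀ (abs_nonneg _) (abs_norm_sub_norm_le z a) 2
  nlinarith [mul_nonneg (sub_nonneg.mpr h4) (mul_nonneg h1 h2)]

/-! ### Hyperbolically equidistributed moduli -/

/-- The point of `(-1, 1)` with hyperbolic coordinate `u = (1 + s) / (1 - s)`. -/
def radius (u : ℝ) : ℝ := (u - 1) / (u + 1)

lemma abs_radius_sub_div {u v : ℝ} (hu : 0 < u) (hv : 0 < v) :
    |radius u - radius v| / (1 - radius v * radius u) = |u - v| / (u + v) := by
  have h1 : radius u - radius v = (u - v) * (2 / ((u + 1) * (v + 1))) := by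
    unfold radius; field_simp; ring
  have h2 : 1 - radius v * radius u = (u + v) * (2 / ((u + 1) * (v + 1))) := by
    unfold radius; field_simp; ring
  have h3 : 0 < 2 / ((u + 1) * (v + 1)) := by positivity
  rw [h1, h2, abs_mul, abs_of_pos h3, mul_div_mul_right _ _ h3.ne']

lemma radius_lt_one {u : ℝ} (hu : 0 < u) : radius u < 1 := by
  unfold radius; rw [div_lt_one (by linarith)]; linarith

lemma radius_mono {u v : ℝ} (hu : 0 < u) (h : u ≤ v) : radius u ≤ radius v := by
  unfold radius
  rw [div_le_div_iff₀ (by linarith) (by linarith)]; nlinarith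

lemma one_add_le_exp_two_sqrt {x : ℝ} (hx : 0 ≤ x) : 1 + x ≤ Real.exp (2 * √x) := by
  have h1 := Real.add_one_le_exp (√x)
  have h2 := Real.sq_sqrt hx
  have h3 := Real.sqrt_nonneg x
  rw [two_mul, Real.exp_add]
  nlinarith

/-- Two points at hyperbolic coordinates `u₀ * exp x`, `u₀ * exp y` have pseudo-hyperbolic distance
`tanh (|x - y| / 2)`. The lower bound `exp (-2 √(2 / |x - y|))` loses decay at infinity but leaves
only the elementary sum of `1 / √k` to estimate. -/
lemma exp_neg_le_ratio {u₀ x y : ℝ} (hu : 0 < u₀) (hxy : x ≠ y) :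
    Real.exp (-(2 * √(2 / |x - y|))) ≤
      |u₀ * Real.exp x - u₀ * Real.exp y| / (u₀ * Real.exp x + u₀ * Real.exp y) := by
  wlog h : y < x generalizing x y
  · have := this hxy.symm (lt_of_le_of_ne (not_lt.mp h) hxy)
    rwa [abs_sub_comm, abs_sub_comm (u₀ * _), add_comm (u₀ * _)] at this
  have hd : 0 < x - y := sub_pos.mpr h
  have he : Real.exp x = Real.exp y * Real.exp (x - y) := by rw [← Real.exp_add]; congr 1; ring
  have hy := Real.exp_pos y
  have hE := Real.add_one_le_exp (x - y)
  have hr : |u₀ * Real.exp x - u₀ * Real.exp y| / (u₀ * Real.exp x + u₀ * Real.exp y)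
      = (Real.exp (x - y) - 1) / (Real.exp (x - y) + 1) := by
    have : u₀ * Real.exp x - u₀ * Real.exp y = u₀ * Real.exp y * (Real.exp (x - y) - 1) := by
      rw [he]; ring
    have h' : u₀ * Real.exp x + u₀ * Real.exp y = u₀ * Real.exp y * (Real.exp (x - y) + 1) := by
      rw [he]; ring
    rw [this, h', abs_of_pos (by apply mul_pos (by positivity); linarith),
      mul_div_mul_left _ _ (by positivity)]
  rw [hr, abs_of_pos hd, Real.exp_neg]
  have h1 := one_add_le_exp_two_sqrt (x := 2 / (x - y)) (by positivity)
  refine (inv_anti₀ (by positivity) h1).trans ?_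
  have h2 : (1 + 2 / (x - y))⁻¹ = (x - y) / (x - y + 2) := by field_simp
  rw [h2, div_le_div_iff₀ (by linarith) (by linarith)]
  nlinarith

lemma sum_inv_sqrt_le (m : ℕ) : ∑ k ∈ Finset.range m, 1 / √((k : ℝ) + 1) ≤ 2 * √(m : ℝ) := by
  induction m with
  | zero => simp
  | succ m ih =>
    rw [Finset.sum_range_succ]
    push_cast
    have h1 : 0 < √((m : ℝ) + 1) := Real.sqrt_pos.mpr (by positivity)
    have h2 := Real.sq_sqrt (show (0 : ℝ) ≤ (m : ℝ) + 1 by positivity)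
    have h3 := Real.sq_sqrt (show (0 : ℝ) ≤ (m : ℝ) by positivity)
    have h4 := Real.sqrt_nonneg (m : ℝ)
    have h5 : 1 / √((m : ℝ) + 1) ≤ 2 * √((m : ℝ) + 1) - 2 * √(m : ℝ) := by
      rw [div_le_iff₀ h1]
      nlinarith [sq_nonneg (√((m : ℝ) + 1) - √(m : ℝ))]
    linarith

/-- The diagonal term `i = j` of the sum is `1 / √0 = 0`. -/
lemma sum_inv_sqrt_abs_le {n j : ℕ} (hj : j < n) :
    ∑ i ∈ Finset.range n, 1 / √|(j : ℝ) - i| ≤ 4 * √(n : ℝ) := by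
  obtain ⟨m, rfl⟩ : ∃ m, n = j + 1 + m := ⟨n - (j + 1), by omega⟩
  rw [Finset.sum_range_add, Finset.sum_range_succ, ← Finset.sum_range_reflect]
  have h1 : ∑ i ∈ Finset.range j, 1 / √|(j : ℝ) - ((j - 1 - i : ℕ) : ℝ)|
      = ∑ k ∈ Finset.range j, 1 / √((k : ℝ) + 1) := by
    apply Finset.sum_congr rfl
    intro i hi
    have hi' := Finset.mem_range.mp hi
    have : ((j - 1 - i : ℕ) : ℝ) = j - 1 - i := by
      rw [Nat.sub_sub, Nat.cast_sub (by omega)]; push_cast; ring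
    rw [this, show (j : ℝ) - (j - 1 - i) = i + 1 by ring, abs_of_pos (by positivity)]
  have h2 : ∑ i ∈ Finset.range m, 1 / √|(j : ℝ) - ((j + 1 + i : ℕ) : ℝ)|
      = ∑ k ∈ Finset.range m, 1 / √((k : ℝ) + 1) := by
    apply Finset.sum_congr rfl
    intro i _
    push_cast
    rw [show (j : ℝ) - (j + 1 + i) = -(i + 1) by ring, abs_neg, abs_of_pos (by positivity)]
  rw [h1, h2]
  have h3 := sum_inv_sqrt_le j
  have h4 := sum_inv_sqrt_le m
  have h5 : √(j : ℝ) ≤ √((j + 1 + m : ℕ) : ℝ) := Real.sqrt_le_sqrt (by exact_mod_cast by omega)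
  have h6 : √(m : ℝ) ≤ √((j + 1 + m : ℕ) : ℝ) := Real.sqrt_le_sqrt (by exact_mod_cast by omega)
  simp only [sub_self, abs_zero, Real.sqrt_zero, div_zero]
  linarith

/-- Points whose moduli are equidistributed for the hyperbolic metric along a radial segment of
hyperbolic length comparable to `L` have separation constant at least `exp (-C n / √L)`. -/
lemma exp_neg_le_prod_blaschkeFactor {n : ℕ} {u₀ L : ℝ} (hu : 0 < u₀) (hL : 0 < L)
    {a : Fin n → ℂ} (ha : ∀ i, ‖a i‖ = radius (u₀ * Real.exp (L / n * (i : ℕ))))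
    (j : Fin n) :
    Real.exp (-(8 * √(2 / L) * n)) ≤
      ∏ i ∈ Finset.univ.erase j, ‖blaschkeFactor (a i) (a j)‖ := by
  have hn : (0 : ℝ) < n := by exact_mod_cast j.pos
  have ha1 : ∀ i, ‖a i‖ < 1 := fun i => by rw [ha]; exact radius_lt_one (by positivity)
  have key : ∀ i ∈ Finset.univ.erase j,
      Real.exp (-(2 * √(2 / L) * √n * (1 / √|((j : ℕ) : ℝ) - (i : ℕ)|))) ≤
        ‖blaschkeFactor (a i) (a j)‖ := by
    intro i hi
    have hij : (j : ℕ) ≠ (i : ℕ) := fun h => (Finset.ne_of_mem_erase hi) (Fin.ext h.symm)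
    have hij' : ((j : ℕ) : ℝ) - (i : ℕ) ≠ 0 := sub_ne_zero.mpr (by exact_mod_cast hij)
    refine le_trans ?_ (abs_norm_sub_div_le_norm_blaschkeFactor (ha1 i) (ha1 j))
    rw [ha, ha, abs_radius_sub_div (by positivity) (by positivity)]
    refine le_trans (le_of_eq ?_) (exp_neg_le_ratio hu ?_)
    · rw [← mul_sub, abs_mul, abs_of_pos (show 0 < L / n by positivity)]
      have : 2 / (L / n * |((j : ℕ) : ℝ) - (i : ℕ)|) = 2 / L * n / |((j : ℕ) : ℝ) - (i : ℕ)| := by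
        have := abs_pos.mpr hij'
        field_simp
      rw [this, Real.sqrt_div (by positivity) |((j : ℕ) : ℝ) - (i : ℕ)|,
        Real.sqrt_mul (by positivity) (n : ℝ)]
      congr 1
      ring
    · intro h
      have h' : L / n * (((j : ℕ) : ℝ) - (i : ℕ)) = 0 := by linarith
      rcases mul_eq_zero.mp h' with h | h
      · exact (show L / n ≠ 0 by positivity) h
      · exact hij' h
  refine le_trans ?_ (Finset.prod_le_prod (fun i _ => (Real.exp_pos _).le) key)
  rw [← Real.exp_sum, Finset.sum_neg_distrib, ← Finset.mul_sum]
  apply Real.exp_le_exp.mpr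
  apply neg_le_neg
  have h1 : ∑ i ∈ Finset.univ.erase j, 1 / √|((j : ℕ) : ℝ) - (i : ℕ)| ≤ 4 * √(n : ℝ) := by
    refine le_trans (Finset.sum_le_sum_of_subset_of_nonneg (Finset.erase_subset _ _)
      (fun _ _ _ => by positivity)) ?_
    rw [Fin.sum_univ_eq_sum_range (fun i : ℕ => 1 / √|((j : ℕ) : ℝ) - i|) n]
    exact sum_inv_sqrt_abs_le j.2
  have h2 : √(n : ℝ) * √(n : ℝ) = n := Real.mul_self_sqrt hn.le
  calc 2 * √(2 / L) * √n * ∑ i ∈ Finset.univ.erase j, 1 / √|((j : ℕ) : ℝ) - (i : ℕ)|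
      ≤ 2 * √(2 / L) * √n * (4 * √(n : ℝ)) := by gcongr
    _ = 8 * √(2 / L) * (√(n : ℝ) * √(n : ℝ)) := by ring
    _ = _ := by rw [h2]

/-! ### The Hardy space norm and point evaluations -/

lemma norm_mul_exp_mem {r : ℝ} (hr : 0 ≤ r) (t : ℝ) :
    ‖(r : ℂ) * Complex.exp ((t : ℂ) * Complex.I)‖ = r := by
  rw [norm_mul, Complex.norm_exp_ofReal_mul_I, Complex.norm_real, Real.norm_of_nonneg hr, mul_one]

lemma hpMean_nonneg (p : ℝ) (f : ℂ → ℂ) (r : ℝ) : 0 ≤ hpMean p f r := by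
  unfold hpMean
  apply mul_nonneg (by positivity)
  exact intervalIntegral.integral_nonneg (by positivity) (fun _ _ => by positivity)

lemma hpMean_rpow_le {p M : ℝ} (hp : 1 ≤ p) {f : ℂ → ℂ} (hM : 0 ≤ M)
    (hf : ∀ z ∈ unitDisk, ‖f z‖ ≤ M) {r : ℝ} (hr : r ∈ Set.Ioo (0 : ℝ) 1) :
    hpMean p f r ^ (1 / p) ≤ M := by
  have hp0 : 0 < p := by linarith
  have h1 : hpMean p f r ≤ M ^ p := by
    unfold hpMean
    have h := intervalIntegral.norm_integral_le_of_norm_le_const (a := 0) (b := 2 * Real.pi)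
      (f := fun t : ℝ => ‖f ((r : ℂ) * Complex.exp ((t : ℂ) * Complex.I))‖ ^ p) (C := M ^ p) (by
        intro t _
        rw [Real.norm_of_nonneg (by positivity)]
        apply Real.rpow_le_rpow (norm_nonneg _) _ hp0.le
        apply hf
        change ‖_‖ < 1
        rw [norm_mul_exp_mem hr.1.le]
        exact hr.2)
    rw [sub_zero, abs_of_pos Real.two_pi_pos] at h
    have h' := (le_abs_self _).trans h
    calc _ ≤ 1 / (2 * Real.pi) * (M ^ p * (2 * Real.pi)) := by gcongr
      _ = M ^ p := by field_simp
  calc hpMean p f r ^ (1 / p) ≤ (M ^ p) ^ (1 / p) :=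
        Real.rpow_le_rpow (hpMean_nonneg _ _ _) h1 (by positivity)
    _ = M := by rw [← Real.rpow_mul hM, mul_one_div_cancel hp0.ne', Real.rpow_one]

lemma memHp_of_bounded {p M : ℝ} (hp : 1 ≤ p) {f : ℂ → ℂ} (hM : 0 ≤ M)
    (hd : DifferentiableOn ℂ f unitDisk) (hf : ∀ z ∈ unitDisk, ‖f z‖ ≤ M) : memHp p f := by
  refine ⟨hd, M, ?_⟩
  rintro _ ⟨r, hr, rfl⟩
  exact hpMean_rpow_le hp hM hf hr

lemma hpNorm_le_of_bounded {p M : ℝ} (hp : 1 ≤ p) {f : ℂ → ℂ} (hM : 0 ≤ M)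
    (hf : ∀ z ∈ unitDisk, ‖f z‖ ≤ M) : hpNorm p f ≤ M := by
  apply Real.sSup_le _ hM
  rintro _ ⟨r, hr, rfl⟩
  exact hpMean_rpow_le hp hM hf hr

lemma hpMean_le_one {p : ℝ} (hp : 1 ≤ p) {f : ℂ → ℂ} (hf : memHp p f) (h1 : hpNorm p f ≤ 1)
    {r : ℝ} (hr : r ∈ Set.Ioo (0 : ℝ) 1) : hpMean p f r ≤ 1 := by
  have h2 : hpMean p f r ^ (1 / p) ≤ 1 := (le_csSup hf.2 ⟨r, hr, rfl⟩).trans h1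
  by_contra! h
  exact absurd h2 (not_le.mpr (Real.one_lt_rpow h (by positivity)))

/-- On the unit ball of `H^p`, point evaluations are bounded uniformly on compact subsets of the
disk: Cauchy's formula on `‖z‖ = r`, together with `x ≤ 1 + x ^ p` in place of Hölder. -/
lemma norm_apply_le_of_hpNorm_le_one {p : ℝ} (hp : 1 ≤ p) {f : ℂ → ℂ} (hf : memHp p f)
    (h1 : hpNorm p f ≤ 1) {r ρ : ℝ} (hρr : ρ < r) (hr : r ∈ Set.Ioo (0 : ℝ) 1)
    {w : ℂ} (hw : ‖w‖ ≤ ρ) : ‖f w‖ ≤ 2 * (r * (r - ρ)⁻¹) := by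
  have hsub : Metric.closedBall (0 : ℂ) r ⊆ unitDisk := by
    intro z hz
    exact lt_of_le_of_lt (mem_closedBall_zero_iff.mp hz) hr.2
  have hwr : w ∈ Metric.ball (0 : ℂ) r := by simpa using lt_of_le_of_lt hw hρr
  have hdc : DiffContOnCl ℂ f (Metric.ball 0 r) := by
    apply DifferentiableOn.diffContOnCl
    rw [closure_ball _ hr.1.ne']
    exact hf.1.mono hsub
  have hC := hdc.two_pi_i_inv_smul_circleIntegral_sub_inv_smul hwr
  have hcirc : ∀ t : ℝ, circleMap 0 r t = (r : ℂ) * Complex.exp ((t : ℂ) * Complex.I) := by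
    intro t; simp [circleMap]
  have hcont : Continuous fun t : ℝ => f ((r : ℂ) * Complex.exp ((t : ℂ) * Complex.I)) := by
    apply ContinuousOn.comp_continuous hf.1.continuousOn (by fun_prop)
    intro t
    apply hsub
    rw [mem_closedBall_zero_iff, norm_mul_exp_mem hr.1.le]
  have hp0 : 0 < p := by linarith
  have hcontp : Continuous fun t : ℝ =>
      ‖f ((r : ℂ) * Complex.exp ((t : ℂ) * Complex.I))‖ ^ p :=
    hcont.norm.rpow_const (fun _ => Or.inr hp0.le)
  have hmean : (∫ t in (0:ℝ)..(2 * Real.pi),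
      ‖f ((r : ℂ) * Complex.exp ((t : ℂ) * Complex.I))‖ ^ p) ≤ 2 * Real.pi := by
    have := hpMean_le_one hp hf h1 hr
    unfold hpMean at this
    rwa [one_div, inv_mul_le_iff₀ Real.two_pi_pos, mul_one] at this
  have hint : ‖∮ z in C(0, r), (z - w)⁻¹ • f z‖ ≤ r * (r - ρ)⁻¹ * (2 * Real.pi + 2 * Real.pi) := by
    unfold circleIntegral
    refine (intervalIntegral.norm_integral_le_of_norm_le (μ := volume) (a := 0) (b := 2 * Real.pi)
      (g := fun t => r * (r - ρ)⁻¹ *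
        (1 + ‖f ((r : ℂ) * Complex.exp ((t : ℂ) * Complex.I))‖ ^ p))
      Real.two_pi_pos.le ?_ ?_).trans ?_
    · refine Filter.Eventually.of_forall fun t _ => ?_
      have hd : ‖deriv (circleMap 0 r) t‖ = r := by
        rw [deriv_circleMap, norm_mul, norm_circleMap_zero]; simp [abs_of_pos hr.1]
      have hinv : ‖(circleMap 0 r t - w)⁻¹‖ ≤ (r - ρ)⁻¹ := by
        rw [norm_inv]
        apply inv_anti₀ (sub_pos.mpr hρr)
        have := norm_sub_norm_le (circleMap 0 r t) w
        rw [norm_circleMap_zero, abs_of_pos hr.1] at this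
        linarith
      have hx : ‖f (circleMap 0 r t)‖ ≤ 1 + ‖f (circleMap 0 r t)‖ ^ p := by
        rcases le_total ‖f (circleMap 0 r t)‖ 1 with h | h
        · have : 0 ≤ ‖f (circleMap 0 r t)‖ ^ p := by positivity
          linarith
        · have := Real.self_le_rpow_of_one_le h hp
          linarith
      rw [norm_smul, norm_smul, hd, ← hcirc, mul_assoc]
      have := hr.1
      gcongr
    · apply Continuous.intervalIntegrable
      fun_prop
    · rw [intervalIntegral.integral_const_mul, intervalIntegral.integral_add
        (continuous_const.intervalIntegrable _ _) (hcontp.intervalIntegrable _ _)]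
      have := hr.1
      have := sub_pos.mpr hρr
      gcongr
      simp
  rw [← hC, norm_smul]
  have h2 : ‖(2 * Real.pi * Complex.I : ℂ)⁻¹‖ = (2 * Real.pi)⁻¹ := by
    simp [abs_of_pos Real.pi_pos]
  rw [h2]
  calc (2 * Real.pi)⁻¹ * ‖∮ z in C(0, r), (z - w)⁻¹ • f z‖
      ≤ (2 * Real.pi)⁻¹ * (r * (r - ρ)⁻¹ * (2 * Real.pi + 2 * Real.pi)) := by gcongr
    _ = 2 * (r * (r - ρ)⁻¹) := by field_simp; ring

/-! ### Moduli attained by the symbol -/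

/-- For every `S < 1`, `‖φ‖` takes all values between `‖φ 0‖` and `S` on one closed disk of radius
`ρ < 1`: apply the intermediate value theorem on a segment `[0, z₁]` with `S < ‖φ z₁‖`. -/
lemma exists_norm_apply_eq {φ : ℂ → ℂ} (hφ_diff : DifferentiableOn ℂ φ unitDisk)
    (hφ_sup : IsLUB ((fun z => ‖φ z‖) '' unitDisk) 1) {S : ℝ} (hS : S < 1) :
    ∃ ρ : ℝ, 0 ≤ ρ ∧ ρ < 1 ∧ ∀ s, ‖φ 0‖ ≤ s → s ≤ S → ∃ w : ℂ, ‖w‖ ≤ ρ ∧ ‖φ w‖ = s := by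
  obtain ⟨_, ⟨z₁, hz₁, rfl⟩, hlt, -⟩ := hφ_sup.exists_between hS
  refine ⟨‖z₁‖, norm_nonneg _, hz₁, fun s h0 h1 => ?_⟩
  have hn : ∀ t ∈ Set.Icc (0 : ℝ) 1, ‖(t : ℂ) * z₁‖ ≤ ‖z₁‖ := by
    intro t ht
    rw [norm_mul, Complex.norm_real, Real.norm_of_nonneg ht.1]
    exact mul_le_of_le_one_left (norm_nonneg _) ht.2
  have hc : ContinuousOn (fun t : ℝ => ‖φ ((t : ℂ) * z₁)‖) (Set.Icc 0 1) := by
    apply ContinuousOn.norm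
    apply hφ_diff.continuousOn.comp (by fun_prop)
    intro t ht
    exact lt_of_le_of_lt (hn t ht) hz₁
  obtain ⟨t, ht, h⟩ := intermediate_value_Icc zero_le_one hc
    (show s ∈ Set.Icc _ _ from ⟨by simpa using h0, by simpa using h1.trans hlt.le⟩)
  exact ⟨t * z₁, hn t ht, h⟩

/-! ### Approximation numbers -/

/-- A Bernstein-type lower bound for approximation numbers: functionals `ev i` of norm at most `C`
that see `T (g j)` as `δ_ij` keep `T` bounded below on the span of the `g j`. -/
lemma le_approxNumber {X : Type} [NormedAddCommGroup X] [NormedSpace ℂ X] (T : X →L[ℂ] X)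
    {n : ℕ} (hn : 0 < n) {C M : ℝ} (hC : 0 < C) (hM : 0 < M) (g : Fin n → X)
    (hg : ∀ i, ‖g i‖ ≤ M) (ev : Fin n → X →ₗ[ℂ] ℂ) (hev : ∀ i x, ‖ev i x‖ ≤ C * ‖x‖)
    (hδ : ∀ i j, ev i (T (g j)) = if i = j then 1 else 0) :
    1 / (C * n * M) ≤ approxNumber T n := by
  apply le_csInf
  · refine ⟨_, 0, ?_, rfl⟩
    have : LinearMap.range ((0 : X →L[ℂ] X) : X →ₗ[ℂ] X) = ⊥ := by
      rw [ContinuousLinearMap.toLinearMap_zero]; exact LinearMap.range_zero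
    rw [this]
    simpa using hn
  rintro _ ⟨R, hR, rfl⟩
  -- Since `rank R < n`, some nonzero combination of the `g j` lies in the kernel of `R`.
  obtain ⟨c, hc0, hRc⟩ : ∃ c : Fin n → ℂ, c ≠ 0 ∧ R (∑ i, c i • g i) = 0 := by
    let A : (Fin n → ℂ) →ₗ[ℂ] X := Fintype.linearCombination ℂ g
    let B : (Fin n → ℂ) →ₗ[ℂ] LinearMap.range (R : X →ₗ[ℂ] X) :=
      (R : X →ₗ[ℂ] X).rangeRestrict ∘ₗ A
    have hB : ¬ Function.Injective B := by
      intro h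
      have := LinearMap.rank_le_of_injective B h
      rw [rank_fin_fun] at this
      exact absurd this (not_le.mpr hR)
    rw [← LinearMap.ker_eq_bot, Submodule.eq_bot_iff] at hB
    push Not at hB
    obtain ⟨c, hc, hc0⟩ := hB
    refine ⟨c, hc0, ?_⟩
    have := congrArg Subtype.val (LinearMap.mem_ker.mp hc)
    simpa [A, B, Fintype.linearCombination_apply] using this
  have : Nonempty (Fin n) := ⟨⟨0, hn⟩⟩
  obtain ⟨j, hj⟩ := Finite.exists_max (fun i => ‖c i‖)
  have hcj : 0 < ‖c j‖ := by
    rw [norm_pos_iff]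
    intro h
    apply hc0
    funext i
    have := hj i
    rw [h, norm_zero] at this
    exact norm_le_zero_iff.mp this
  set f := ∑ i, c i • g i with hf
  have h1 : ev j (T f) = c j := by
    simp [hf, map_sum, hδ]
  have h2 : ‖f‖ ≤ n * (‖c j‖ * M) := by
    calc ‖f‖ ≤ ∑ i, ‖c i • g i‖ := norm_sum_le _ _
      _ ≤ ∑ _i : Fin n, ‖c j‖ * M := by
          apply Finset.sum_le_sum
          intro i _
          rw [norm_smul]
          exact mul_le_mul (hj i) (hg i) (norm_nonneg _) (norm_nonneg _)
      _ = _ := by simp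
  have h3 : T f = (T - R) f := by simp [hRc]
  have h4 : ‖c j‖ ≤ C * (‖T - R‖ * (n * (‖c j‖ * M))) := by
    calc ‖c j‖ ≤ C * ‖T f‖ := h1 ▸ hev j (T f)
      _ ≤ C * (‖T - R‖ * ‖f‖) := by rw [h3]; gcongr; exact (T - R).le_opNorm f
      _ ≤ _ := by gcongr
  rw [div_le_iff₀ (by positivity)]
  have h5 : ‖c j‖ * 1 ≤ ‖c j‖ * (‖T - R‖ * (C * n * M)) := by
    calc ‖c j‖ * 1 = ‖c j‖ := mul_one _
      _ ≤ C * (‖T - R‖ * (n * (‖c j‖ * M))) := h4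
      _ = ‖c j‖ * (‖T - R‖ * (C * n * M)) := by ring
  exact le_of_mul_le_mul_left h5 hcj

lemma approxNumber_nonneg {X : Type*} [NormedAddCommGroup X] [NormedSpace ℂ X] (T : X →L[ℂ] X)
    (n : ℕ) : 0 ≤ approxNumber T n := by
  apply Real.sInf_nonneg
  rintro _ ⟨R, -, rfl⟩
  exact norm_nonneg _

lemma approxNumber_le_norm {X : Type*} [NormedAddCommGroup X] [NormedSpace ℂ X] (T : X →L[ℂ] X)
    {n : ℕ} (hn : 0 < n) : approxNumber T n ≤ ‖T‖ := by
  apply csInf_le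
  · refine ⟨0, ?_⟩
    rintro _ ⟨R, -, rfl⟩
    exact norm_nonneg _
  · refine ⟨0, ?_, by simp⟩
    have : LinearMap.range ((0 : X →L[ℂ] X) : X →ₗ[ℂ] X) = ⊥ := by
      rw [ContinuousLinearMap.toLinearMap_zero]; exact LinearMap.range_zero
    rw [this]
    simpa using hn

/-! ### Growth of `n`-th roots -/

lemma tendsto_rpow_inv_of_exp_bounds {a : ℕ → ℝ} (ha : ∀ n, 0 ≤ a n)
    (hlo : ∀ ε > 0, ∀ᶠ n : ℕ in atTop, Real.exp (-(ε * n)) ≤ a n)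
    (hhi : ∀ ε > 0, ∀ᶠ n : ℕ in atTop, a n ≤ Real.exp (ε * n)) :
    Filter.Tendsto (fun n : ℕ => a n ^ ((n : ℝ)⁻¹)) Filter.atTop (nhds 1) := by
  have hroot : ∀ (x : ℝ) (n : ℕ), 0 < n → Real.exp (x * n) ^ ((n : ℝ)⁻¹) = Real.exp x := by
    intro x n hn
    have : (n : ℝ) ≠ 0 := by exact_mod_cast hn.ne'
    rw [← Real.exp_mul, mul_assoc, mul_inv_cancel₀ this, mul_one]
  rw [tendsto_order]
  constructor
  · intro y hy
    obtain ⟨ε, hε, hy'⟩ : ∃ ε > 0, y < Real.exp (-ε) := by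
      have hc : Filter.Tendsto (fun ε : ℝ => Real.exp (-ε)) (nhdsWithin 0 (Set.Ioi 0)) (nhds 1) := by
        have : Continuous fun ε : ℝ => Real.exp (-ε) := by fun_prop
        simpa using (this.tendsto 0).mono_left nhdsWithin_le_nhds
      obtain ⟨ε, h1, h2⟩ := ((hc.eventually_const_lt hy).and self_mem_nhdsWithin).exists
      exact ⟨ε, h2, h1⟩
    filter_upwards [hlo ε hε, eventually_gt_atTop 0] with n h hn
    refine hy'.trans_le ?_
    rw [← hroot (-ε) n hn]
    apply Real.rpow_le_rpow (Real.exp_pos _).le _ (by positivity)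
    rwa [neg_mul]
  · intro y hy
    obtain ⟨ε, hε, hy'⟩ : ∃ ε > 0, Real.exp ε < y := by
      have hc : Filter.Tendsto (fun ε : ℝ => Real.exp ε) (nhdsWithin 0 (Set.Ioi 0)) (nhds 1) := by
        have : Continuous fun ε : ℝ => Real.exp ε := by fun_prop
        simpa using (this.tendsto 0).mono_left nhdsWithin_le_nhds
      obtain ⟨ε, h1, h2⟩ := ((hc.eventually_lt_const hy).and self_mem_nhdsWithin).exists
      exact ⟨ε, h2, h1⟩
    filter_upwards [hhi ε hε, eventually_gt_atTop 0] with n h hn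
    refine lt_of_le_of_lt ?_ hy'
    rw [← hroot ε n hn]
    exact Real.rpow_le_rpow (ha n) h (by positivity)

lemma eventually_mul_le_exp (K : ℝ) {ε : ℝ} (hε : 0 < ε) :
    ∀ᶠ n : ℕ in atTop, K * n ≤ Real.exp (ε * n) := by
  have h := (isLittleO_pow_exp_pos_mul_atTop 1 hε).comp_tendsto tendsto_natCast_atTop_atTop
  have hK : 0 < 1 / (|K| + 1) := by positivity
  filter_upwards [h.bound hK] with n hn
  simp only [Function.comp_apply, pow_one, Real.norm_eq_abs, Nat.abs_cast, Real.abs_exp] at hn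
  rw [one_div, le_inv_mul_iff₀ (by positivity)] at hn
  refine le_trans ?_ hn
  gcongr
  linarith [le_abs_self K]

/-! ### The limit of `a_n(C_φ)^{1/n}` -/

/-- For `1 ≤ p < ∞` and an analytic self-map `φ` of the unit disk with
`‖φ‖_∞ = 1`, the approximation numbers of `C_φ` on `H^p` satisfy `lim aₙ(C_φ)^{1/n} = 1`. -/
theorem beta_eq_one_Hp
    (p : ℝ) (hp : 1 ≤ p)
    (X : Type) [NormedAddCommGroup X] [NormedSpace ℂ X] [CompleteSpace X]
    (ι : X →ₗ[ℂ] (ℂ → ℂ))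
    (hι_mem : ∀ g : X, memHp p (ι g))
    (hι_norm : ∀ g : X, ‖g‖ = hpNorm p (ι g))
    (hι_surj : ∀ f : ℂ → ℂ, memHp p f → ∃ g : X, ∀ z ∈ unitDisk, ι g z = f z)
    (hι_inj : ∀ g : X, (∀ z ∈ unitDisk, ι g z = 0) → g = 0)
    (φ : ℂ → ℂ)
    (hφ_diff : DifferentiableOn ℂ φ unitDisk)
    (hφ_maps : Set.MapsTo φ unitDisk unitDisk)
    (hφ_sup : IsLUB ((fun z => ‖φ z‖) '' unitDisk) 1)
    (Cφ : X →L[ℂ] X)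
    (hCφ : ∀ g : X, ∀ z ∈ unitDisk, ι (Cφ g) z = ι g (φ z)) :
    Filter.Tendsto (fun n : ℕ => approxNumber Cφ n ^ ((n : ℝ)⁻¹)) Filter.atTop (nhds 1) := by
  have heval : ∀ ρ : ℝ, 0 ≤ ρ → ρ < 1 → ∃ C : ℝ, 0 < C ∧
      ∀ (x : X) (w : ℂ), ‖w‖ ≤ ρ → ‖ι x w‖ ≤ C * ‖x‖ := by
    intro ρ h0 h1
    have hr : (1 + ρ) / 2 ∈ Set.Ioo (0 : ℝ) 1 := ⟨by linarith, by linarith⟩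
    have hρr : ρ < (1 + ρ) / 2 := by linarith
    have hpos := sub_pos.mpr hρr
    have hrpos := hr.1
    refine ⟨2 * ((1 + ρ) / 2 * ((1 + ρ) / 2 - ρ)⁻¹), by positivity, fun x w hw => ?_⟩
    rcases eq_or_ne x 0 with rfl | hx
    · simp
    have hx' : 0 < ‖x‖ := norm_pos_iff.mpr hx
    set y : X := ((‖x‖ : ℂ)⁻¹) • x with hy
    have hy1 : hpNorm p (ι y) ≤ 1 := by
      rw [← hι_norm, hy, norm_smul, norm_inv, Complex.norm_real, norm_norm,
        inv_mul_cancel₀ hx'.ne']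
    have h := norm_apply_le_of_hpNorm_le_one hp (hι_mem y) hy1 hρr hr hw
    rw [hy, map_smul, Pi.smul_apply, norm_smul, norm_inv, Complex.norm_real, norm_norm,
      inv_mul_le_iff₀ hx'] at h
    rwa [mul_comm]
  apply tendsto_rpow_inv_of_exp_bounds (approxNumber_nonneg Cφ)
  · intro ε hε
    have hφ0 : ‖φ 0‖ < 1 := hφ_maps (show (0 : ℂ) ∈ unitDisk by simp [unitDisk])
    -- The length `L` is chosen so that `8 * √(2 / L) = ε / 2`.
    set L : ℝ := 2 * (16 / ε) ^ 2 with hLdef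
    have hL : 0 < L := by positivity
    have hLε : 8 * √(2 / L) = ε / 2 := by
      have : 2 / L = (ε / 16) ^ 2 := by rw [hLdef]; field_simp
      rw [this, Real.sqrt_sq (by positivity)]
      ring
    set u₀ : ℝ := (1 + ‖φ 0‖) / (1 - ‖φ 0‖) with hu₀
    have hu : 0 < u₀ := div_pos (by positivity) (by linarith)
    have hrad : radius u₀ = ‖φ 0‖ := by
      have : 1 - ‖φ 0‖ ≠ 0 := by linarith
      rw [hu₀, radius]
      field_simp
      ring
    obtain ⟨ρ, hρ0, hρ1, hpts⟩ := exists_norm_apply_eq hφ_diff hφ_sup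
      (radius_lt_one (show 0 < u₀ * Real.exp L by positivity))
    obtain ⟨C, hC, hev⟩ := heval ρ hρ0 hρ1
    filter_upwards [eventually_mul_le_exp C (half_pos hε), eventually_gt_atTop 0] with n hnC hn
    have hn' : (0 : ℝ) < n := by exact_mod_cast hn
    have hex : ∀ i : Fin n, ∃ w : ℂ, ‖w‖ ≤ ρ ∧
        ‖φ w‖ = radius (u₀ * Real.exp (L / n * (i : ℕ))) := by
      intro i
      apply hpts
      · rw [← hrad]
        apply radius_mono hu
        exact le_mul_of_one_le_right hu.le (Real.one_le_exp (by positivity))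
      · apply radius_mono (by positivity)
        have hi : ((i : ℕ) : ℝ) ≤ n := by exact_mod_cast i.2.le
        gcongr
        rw [div_mul_eq_mul_div, div_le_iff₀ hn']
        gcongr
    choose w hwρ hw using hex
    have hwD : ∀ i, w i ∈ unitDisk := fun i => lt_of_le_of_lt (hwρ i) hρ1
    have hzD : ∀ i, ‖φ (w i)‖ < 1 := fun i => hφ_maps (hwD i)
    set M : ℝ := Real.exp (ε / 2 * n) with hM
    have hsep : ∀ j : Fin n, M⁻¹ ≤
        ‖∏ i ∈ Finset.univ.erase j, blaschkeFactor (φ (w i)) (φ (w j))‖ := by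
      intro j
      have := exp_neg_le_prod_blaschkeFactor hu hL hw j
      rwa [hLε, Real.exp_neg, ← norm_prod] at this
    have hMpos : 0 < M := Real.exp_pos _
    -- Interpolating functions: `F j (φ (w i)) = δ_ij`, with `‖F j‖_∞ ≤ M`.
    let F : Fin n → ℂ → ℂ := fun j z =>
      (∏ i ∈ Finset.univ.erase j, blaschkeFactor (φ (w i)) z) /
        ∏ i ∈ Finset.univ.erase j, blaschkeFactor (φ (w i)) (φ (w j))
    have hFd : ∀ j, DifferentiableOn ℂ (F j) unitDisk := by
      intro j
      apply DifferentiableOn.div_const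
      apply DifferentiableOn.fun_finsetProd
      intro i _
      exact differentiableOn_blaschkeFactor (hzD i)
    have hFb : ∀ j, ∀ z ∈ unitDisk, ‖F j z‖ ≤ M := by
      intro j z hz
      have h1 : ‖∏ i ∈ Finset.univ.erase j, blaschkeFactor (φ (w i)) z‖ ≤ 1 := by
        rw [norm_prod]
        exact Finset.prod_le_one (fun _ _ => norm_nonneg _)
          (fun i _ => norm_blaschkeFactor_le_one (hzD i) hz)
      have h2 := hsep j
      have h3 : 0 < M⁻¹ := inv_pos.mpr hMpos
      simp only [F, norm_div]
      rw [div_le_iff₀ (h3.trans_le h2)]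
      refine h1.trans ?_
      rwa [← inv_le_iff_one_le_mul₀' hMpos]
    have hδF : ∀ i j, F j (φ (w i)) = if i = j then 1 else 0 := by
      intro i j
      split_ifs with hij
      · subst hij
        apply div_self
        rw [← norm_pos_iff]
        exact (inv_pos.mpr hMpos).trans_le (hsep i)
      · simp only [F]
        rw [Finset.prod_eq_zero (Finset.mem_erase.mpr ⟨hij, Finset.mem_univ i⟩)
          (blaschkeFactor_self _), zero_div]
    choose g hg using fun j => hι_surj (F j) (memHp_of_bounded hp hMpos.le (hFd j) (hFb j))
    have hgM : ∀ j, ‖g j‖ ≤ M := by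
      intro j
      rw [hι_norm]
      apply hpNorm_le_of_bounded hp hMpos.le
      intro z hz
      rw [hg j z hz]
      exact hFb j z hz
    have hmain := le_approxNumber Cφ hn hC hMpos g hgM
      (fun i => (LinearMap.proj (w i) : (ℂ → ℂ) →ₗ[ℂ] ℂ) ∘ₗ ι)
      (fun i x => hev x (w i) (hwρ i))
      (fun i j => by
        simp only [LinearMap.comp_apply, LinearMap.proj_apply]
        rw [hCφ _ _ (hwD i), hg j _ (hφ_maps (hwD i)), hδF])
    refine le_trans ?_ hmain
    rw [Real.exp_neg, ← one_div]
    apply one_div_le_one_div_of_le (by positivity)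
    calc C * n * M ≤ M * M := by gcongr
      _ = Real.exp (ε * n) := by rw [hM, ← Real.exp_add]; congr 1; ring
  · intro ε hε
    filter_upwards [eventually_mul_le_exp ‖Cφ‖ hε, eventually_gt_atTop 0] with n h hn
    refine (approxNumber_le_norm Cφ hn).trans (le_trans ?_ h)
    exact le_mul_of_one_le_right (norm_nonneg _) (by exact_mod_cast hn)

end
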